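/- Let k ≥ 1, v̄ > 0 and M > 0, and let q : (0,∞) → ℝ be measurable with v̄ ≤ q(y) ≤ M² for all y > 0. Let φ : [0,∞) → ℝ be continuous with φ(0) = 1, twice continuously differentiable on (0,∞), with φ and φ' square-integrable on (0,∞), with φ(y) → 0 and φ'(y) → 0 as y → ∞, with the one-sided derivative limit φ'(0+) existing, and satisfying −φ''(y) + k² q(y) φ(y) = 0 for all y > 0. Then: (i) −φ'(0+) = ∫_0^∞ (φ')² dy + k² ∫_0^∞ q φ² dy; (ii) φ'(0+) < 0 and |φ'(0+)| ≤ kM; (iii) ∫_0^∞ φ² dy ≤ M/(v̄ k). -/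

import Mathlib

open Real MeasureTheory Set Filter

/-- A function with nonnegative derivative on `(0,∞)` tending to `0` at infinity is `≤ 0`. -/
lemma nonpos_of_deriv_nonneg (F F' : ℝ → ℝ) (hF : ∀ y, 0 < y → HasDerivAt F (F' y) y)
    (hF' : ∀ y, 0 < y → 0 ≤ F' y) (hlim : Tendsto F atTop (nhds 0)) :
    ∀ y, 0 < y → F y ≤ 0 := by
  have hm : MonotoneOn F (Ioi 0) := by
    apply monotoneOn_of_deriv_nonneg (convex_Ioi 0)
    · intro y hy
      exact (hF y hy).continuousAt.continuousWithinAt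
    · intro y hy
      rw [interior_Ioi] at hy
      exact (hF y hy).differentiableAt.differentiableWithinAt
    · intro y hy
      rw [interior_Ioi] at hy
      rw [(hF y hy).deriv]
      exact hF' y hy
  intro y hy
  apply ge_of_tendsto hlim
  filter_upwards [eventually_ge_atTop y] with z hz
  exact hm hy (lt_of_lt_of_le hy hz) hz

/-- For `v̄ ≤ q ≤ M²` on `(0,∞)` and a decaying solution `φ` of `-φ'' + k²qφ = 0` on `(0,∞)`
with `φ(0) = 1` and one-sided derivative `dp = φ'(0⁺)`:
(i) `-φ'(0⁺) = ∫_0^∞ (φ')² + k²∫_0^∞ qφ²`;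
(ii) `φ'(0⁺) < 0` and `|φ'(0⁺)| ≤ kM`;
(iii) `∫_0^∞ φ² ≤ M/(v̄k)`. -/
theorem decaying_mode_estimates (k : ℕ) (hk : 1 ≤ k) (vbar M : ℝ)
    (hv : 0 < vbar) (hM : 0 < M)
    (q : ℝ → ℝ) (hq : Measurable q)
    (hqb : ∀ y : ℝ, 0 < y → vbar ≤ q y ∧ q y ≤ M ^ 2)
    (φ : ℝ → ℝ) (dp : ℝ)
    (hcont : ContinuousOn φ (Ici 0)) (hφ0 : φ 0 = 1)
    (hC2 : ContDiffOn ℝ 2 φ (Ioi 0))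
    (hsq : IntegrableOn (fun y => (φ y) ^ 2) (Ioi 0))
    (hsq' : IntegrableOn (fun y => (deriv φ y) ^ 2) (Ioi 0))
    (hdec : Tendsto φ atTop (nhds 0)) (hdec' : Tendsto (deriv φ) atTop (nhds 0))
    (hdp : Tendsto (deriv φ) (nhdsWithin 0 (Ioi 0)) (nhds dp))
    (hode : ∀ y : ℝ, 0 < y → -(deriv (deriv φ) y) + (k : ℝ) ^ 2 * q y * φ y = 0) :
    -dp = (∫ y in Ioi (0 : ℝ), (deriv φ y) ^ 2) +
        (k : ℝ) ^ 2 * (∫ y in Ioi (0 : ℝ), q y * (φ y) ^ 2) ∧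
    dp < 0 ∧ |dp| ≤ (k : ℝ) * M ∧
    (∫ y in Ioi (0 : ℝ), (φ y) ^ 2) ≤ M / (vbar * (k : ℝ)) := by
  have hk0 : (0 : ℝ) < k := by exact_mod_cast hk
  have h1 : ∀ y, 0 < y → HasDerivAt φ (deriv φ y) y := fun y hy =>
    ((hC2.differentiableOn (by norm_num)).differentiableAt (Ioi_mem_nhds hy)).hasDerivAt
  have hdC : ContDiffOn ℝ 1 (deriv φ) (Ioi 0) :=
    hC2.deriv_of_isOpen isOpen_Ioi (by norm_num)
  have h2 : ∀ y, 0 < y → HasDerivAt (deriv φ) ((k : ℝ) ^ 2 * q y * φ y) y := fun y hy => by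
    have h := ((hdC.differentiableOn (by norm_num)).differentiableAt (Ioi_mem_nhds hy)).hasDerivAt
    have e : deriv (deriv φ) y = (k : ℝ) ^ 2 * q y * φ y := by linarith [hode y hy]
    rwa [e] at h
  have hφlim : Tendsto φ (nhdsWithin 0 (Ioi 0)) (nhds 1) := by
    have := (hcont 0 self_mem_Ici).mono Ioi_subset_Ici_self
    rw [ContinuousWithinAt, hφ0] at this
    exact this
  have hF : ∀ y, 0 < y → φ y * deriv φ y ≤ 0 := by
    apply nonpos_of_deriv_nonneg (fun y => φ y * deriv φ y) _
      (fun y hy => (h1 y hy).mul (h2 y hy))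
    · intro y hy
      have : 0 ≤ q y := hv.le.trans (hqb y hy).1
      have : 0 ≤ (k : ℝ) ^ 2 * q y * φ y ^ 2 := by positivity
      nlinarith [sq_nonneg (deriv φ y)]
    · simpa using hdec.mul hdec'
  have hG : ∀ y, 0 < y → deriv φ y ^ 2 - ((k : ℝ) * M) ^ 2 * φ y ^ 2 ≤ 0 := by
    apply nonpos_of_deriv_nonneg (fun y => deriv φ y ^ 2 - ((k : ℝ) * M) ^ 2 * φ y ^ 2) _
      (fun y hy => ((h2 y hy).pow 2).sub (((h1 y hy).pow 2).const_mul _))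
    · intro y hy
      have a := mul_nonneg (mul_nonneg (sq_nonneg (k : ℝ)) (sub_nonneg.2 (hqb y hy).2))
        (neg_nonneg.2 (hF y hy))
      simp only [Nat.cast_ofNat, Nat.add_one_sub_one, pow_one]
      nlinarith
    · simpa using (hdec'.pow 2).sub ((hdec.pow 2).const_mul (((k : ℝ) * M) ^ 2))
  have hdpsq : dp ^ 2 ≤ ((k : ℝ) * M) ^ 2 := by
    have hl := (hdp.pow 2).sub ((hφlim.pow 2).const_mul (((k : ℝ) * M) ^ 2))
    have := le_of_tendsto hl (by
      filter_upwards [self_mem_nhdsWithin] with y hy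
      exact hG y hy)
    linarith
  have habs : |dp| ≤ (k : ℝ) * M := abs_le_of_sq_le_sq hdpsq (by positivity)
  have hqint : IntegrableOn (fun y => q y * φ y ^ 2) (Ioi 0) := by
    refine Integrable.bdd_mul (c := M ^ 2) hsq hq.aestronglyMeasurable ?_
    filter_upwards [ae_restrict_mem measurableSet_Ioi] with y hy
    rw [Real.norm_eq_abs, abs_of_nonneg (hv.le.trans (hqb y hy).1)]
    exact (hqb y hy).2
  have hi : -dp = (∫ y in Ioi (0 : ℝ), (deriv φ y) ^ 2) +
        (k : ℝ) ^ 2 * (∫ y in Ioi (0 : ℝ), q y * (φ y) ^ 2) := by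
    have e : (deriv φ * deriv φ + φ * fun y => (k : ℝ) ^ 2 * q y * φ y) =
        fun y => deriv φ y ^ 2 + (k : ℝ) ^ 2 * (q y * φ y ^ 2) := by
      funext y
      simp only [Pi.add_apply, Pi.mul_apply]
      ring
    have hI : IntegrableOn (fun y => deriv φ y ^ 2 + (k : ℝ) ^ 2 * (q y * φ y ^ 2)) (Ioi 0) :=
      hsq'.add (hqint.const_mul _)
    have h := integral_Ioi_deriv_mul_eq_sub (a := 0) (u := φ) (v := deriv φ) (u' := deriv φ)
      (v' := fun y => (k : ℝ) ^ 2 * q y * φ y) (a' := 1 * dp) (b' := 0 * 0) h1 h2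
      (by rw [e]; exact hI) (hφlim.mul hdp) (hdec.mul hdec')
    have e2 : ∫ y in Ioi (0 : ℝ), (deriv φ y * deriv φ y + φ y * ((k : ℝ) ^ 2 * q y * φ y)) =
        ∫ y in Ioi (0 : ℝ), (deriv φ y ^ 2 + (k : ℝ) ^ 2 * (q y * φ y ^ 2)) := by
      congr 1
    rw [e2, integral_add hsq' (hqint.const_mul _), integral_const_mul] at h
    linarith
  have hlow : vbar * (∫ y in Ioi (0 : ℝ), φ y ^ 2) ≤ ∫ y in Ioi (0 : ℝ), q y * φ y ^ 2 := by
    rw [← integral_const_mul]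
    apply setIntegral_mono_on (hsq.const_mul _) hqint measurableSet_Ioi
    intro y hy
    exact mul_le_mul_of_nonneg_right (hqb y hy).1 (sq_nonneg _)
  have hd0 : 0 ≤ ∫ y in Ioi (0 : ℝ), deriv φ y ^ 2 := integral_nonneg fun y => sq_nonneg _
  have hpos : 0 < ∫ y in Ioi (0 : ℝ), φ y ^ 2 := by
    rw [setIntegral_pos_iff_support_of_nonneg_ae (ae_of_all _ fun y => sq_nonneg _) hsq]
    have hev := hφlim.eventually (lt_mem_nhds (zero_lt_one))
    obtain ⟨u, hu, hsub⟩ := mem_nhdsGT_iff_exists_Ioo_subset.1 hev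
    have hss : Ioo 0 u ⊆ Function.support (fun y => φ y ^ 2) ∩ Ioi 0 := by
      intro y hy
      have : 0 < φ y := hsub hy
      exact ⟨by simp [this.ne'], hy.1⟩
    refine lt_of_lt_of_le ?_ (measure_mono hss)
    simpa using hu
  have hkey : (k : ℝ) ^ 2 * (vbar * ∫ y in Ioi (0 : ℝ), φ y ^ 2) ≤ -dp := by
    have := mul_le_mul_of_nonneg_left hlow (sq_nonneg (k : ℝ))
    linarith
  refine ⟨hi, ?_, habs, ?_⟩
  · have : 0 < (k : ℝ) ^ 2 * (vbar * ∫ y in Ioi (0 : ℝ), φ y ^ 2) := by positivity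
    linarith
  · rw [le_div_iff₀ (by positivity)]
    have h3 : (k : ℝ) * ((∫ y in Ioi (0 : ℝ), φ y ^ 2) * (vbar * k)) ≤ k * M := by
      have := neg_le_abs dp
      linarith
    exact le_of_mul_le_mul_left h3 hk0
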